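/- arXiv:0809.1312 — 6 statements merged into one kernel-verified Lean document; each statement's English description precedes it below -/
import Mathlib

section
/- Under the stated framework, fix r ∈ (0,R] with μ(r) < 1, let φ_*(r) be the smallest positive root of φ = d(r,φ) (assumed to exist), set a = ‖f(x₀)‖, and assume a < φ_*(r) and λ(r)θ(r)·w(r,a) ≤ r. Then the equation f(x) = 0 has a solution x_* with ‖x_* − x₀‖ ≤ r, the iterates x_n converge to x_*, and for every n = 0,1,2,… both the aposteriori estimate ‖x_n − x_*‖ ≤ λ(r)θ(r)·w(r,‖f(x_n)‖) and the apriori estimate ‖x_n − x_*‖ ≤ λ(r)θ(r)·w(r, d⁽ⁿ⁾(r,a)) hold. -/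
/-!
The residuals `‖f (x n)‖` are dominated by the scalar iteration of `d`. Writing `h = x (n+1) - x n`,
one has `‖h‖ ≤ λθ‖f (x n)‖`, and `f (x (n+1))` splits into the linearised residual
`f (x n) + f' (x n) h`, bounded by `μ‖f (x n)‖`, and the Taylor remainder, bounded by
`∫₀^‖h‖ ω` (`norm_taylor_remainder_le_integral`). Hence `‖f (x (n+1))‖ ≤ d ‖f (x n)‖`
as long as both iterates stay in the ball of radius `r`, and they do because the total length of
the steps is at most `λθ · w(r, a) ≤ r`. Since `d` is monotone, the step lengths are bounded by the
terms of the convergent series `λθ · ∑ d^[k] a`, so `x` is Cauchy; its limit is a zero of `f` by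
continuity, and summing the tails of the series yields the two error estimates.

The modulus `ω r` is only monotone, possibly discontinuous, so its integral need not be
differentiable; it does however have a right derivative, namely the right limit of `ω r`, and this
suffices for the mean value inequality behind the remainder bound.
-/

open Filter Topology MeasureTheory
open scoped RealInnerProductSpace

/-- The right derivative of the integral of a monotone function is its right limit. -/
lemma hasDerivWithinAt_integral_rightLim {v : ℝ → ℝ} (hv : Monotone v) (t : ℝ) :
    HasDerivWithinAt (fun u => ∫ τ in (0:ℝ)..u, v τ) (Function.rightLim v t) (Set.Ici t) t := by
  have h1 : Tendsto v (𝓝[>] t ⊓ ae volume) (𝓝 (Function.rightLim v t)) :=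
    (hv.tendsto_rightLim t).mono_left inf_le_left
  exact intervalIntegral.integral_hasDerivWithinAt_of_tendsto_ae_right
    (s := Set.Ici t) (t := Set.Ioi t) hv.intervalIntegrable
    hv.measurable.stronglyMeasurable.stronglyMeasurableAtFilter h1

/-- First order Taylor estimate under a merely monotone modulus of continuity of the derivative. -/
lemma norm_taylor_remainder_le_integral
    {H : Type*} [NormedAddCommGroup H] [NormedSpace ℝ H]
    {f : H → H} {f' : H → H →L[ℝ] H} {v : ℝ → ℝ} (hv : Monotone v) {x h : H}
    (hf : ∀ t ∈ Set.Icc (0:ℝ) 1, HasFDerivAt f (f' (x + t • h)) (x + t • h))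
    (hlip : ∀ t ∈ Set.Icc (0:ℝ) 1, ‖f' (x + t • h) - f' x‖ ≤ v (t * ‖h‖)) :
    ‖f (x + h) - f x - f' x h‖ ≤ ∫ τ in (0:ℝ)..‖h‖, v τ := by
  have hg : ∀ t ∈ Set.Icc (0:ℝ) 1, HasDerivAt (fun t : ℝ => f (x + t • h) - f x - t • f' x h)
      (f' (x + t • h) h - f' x h) t := by
    intro t ht
    have h1 : HasDerivAt (fun t : ℝ => x + t • h) h t := by
      simpa using ((hasDerivAt_id t).smul_const h).const_add x
    have h2 := (hf t ht).comp_hasDerivAt t h1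
    have h3 : HasDerivAt (fun t : ℝ => t • f' x h) (f' x h) t := by
      simpa using (hasDerivAt_id t).smul_const (f' x h)
    exact (h2.sub_const (f x)).sub h3
  have hB : ∀ t : ℝ, HasDerivWithinAt (fun t : ℝ => ∫ τ in (0:ℝ)..(t * ‖h‖), v τ)
      (Function.rightLim v (t * ‖h‖) * ‖h‖) (Set.Ici t) t := by
    intro t
    have h1 : HasDerivWithinAt (fun t : ℝ => t * ‖h‖) ‖h‖ (Set.Ici t) t := by
      simpa using ((hasDerivAt_id t).mul_const ‖h‖).hasDerivWithinAt
    exact (hasDerivWithinAt_integral_rightLim hv (t * ‖h‖)).comp t h1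
      (fun u hu => mul_le_mul_of_nonneg_right hu (norm_nonneg h))
  have hBc : Continuous (fun t : ℝ => ∫ τ in (0:ℝ)..(t * ‖h‖), v τ) :=
    (intervalIntegral.continuous_primitive (fun _ _ => hv.intervalIntegrable) 0).comp
      (continuous_id.mul continuous_const)
  have := image_norm_le_of_norm_deriv_right_le_deriv_boundary'
    (a := (0:ℝ)) (b := 1)
    (f := fun t : ℝ => f (x + t • h) - f x - t • f' x h)
    (f' := fun t => f' (x + t • h) h - f' x h)
    (fun t ht => (hg t ht).continuousAt.continuousWithinAt)
    (fun t ht => (hg t ⟨ht.1, ht.2.le⟩).hasDerivWithinAt)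
    (by simp) hBc.continuousOn (fun t _ => hB t)
    (fun t ht => by
      rw [← sub_apply]
      refine (ContinuousLinearMap.le_opNorm _ _).trans ?_
      exact mul_le_mul_of_nonneg_right
        ((hlip t ⟨ht.1, ht.2.le⟩).trans (hv.le_rightLim le_rfl)) (norm_nonneg h))
    (x := 1) (by simp)
  simpa using this

/-- Theorem 1, existence, convergence, aposteriori and apriori estimates.
Gradient-like iterative method for a nonlinear operator equation on a real Hilbert space. -/
theorem gradient_like_convergence
    {H : Type*} [NormedAddCommGroup H] [InnerProductSpace ℝ H] [CompleteSpace H]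
    (x₀ : H) (R : ℝ) (hR : 0 < R)
    (f : H → H) (f' : H → H →L[ℝ] H)
    (hf : ∀ x : H, ‖x - x₀‖ ≤ R → HasFDerivAt f (f' x) x)
    (T : H → H →L[ℝ] H) (Λ : H → H → ℝ)
    (lam θ μ : ℝ → ℝ) (ω : ℝ → ℝ → ℝ)
    (hlam0 : ∀ r ∈ Set.Icc (0:ℝ) R, 0 ≤ lam r)
    (hθ0 : ∀ r ∈ Set.Icc (0:ℝ) R, 0 ≤ θ r)
    (hμ0 : ∀ r ∈ Set.Icc (0:ℝ) R, 0 ≤ μ r)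
    (hω0 : ∀ r ∈ Set.Icc (0:ℝ) R, ∀ t, 0 ≤ t → 0 ≤ ω r t)
    (hωmono : ∀ r ∈ Set.Icc (0:ℝ) R, MonotoneOn (ω r) (Set.Ici 0))
    (hωint : ∀ r ∈ Set.Icc (0:ℝ) R, ∀ t : ℝ, IntervalIntegrable (ω r) volume 0 t)
    -- condition (i): bounds on the relaxation functional and on `T`
    (hΛnonneg : ∀ r ∈ Set.Icc (0:ℝ) R, ∀ x : H, ‖x - x₀‖ ≤ r → 0 ≤ Λ x (f x))
    (hΛbound : ∀ r ∈ Set.Icc (0:ℝ) R, ∀ x : H, ‖x - x₀‖ ≤ r → Λ x (f x) ≤ lam r)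
    (hTbound : ∀ r ∈ Set.Icc (0:ℝ) R, ∀ x : H, ‖x - x₀‖ ≤ r → ‖T x‖ ≤ θ r)
    -- condition (ii): residual contraction
    (hres : ∀ r ∈ Set.Icc (0:ℝ) R, ∀ x : H, ‖x - x₀‖ ≤ r →
      ‖f x - Λ x (f x) • (f' x) ((T x) (f x))‖ ≤ μ r * ‖f x‖)
    -- condition (iii): continuity of the derivative
    (hlip : ∀ r ∈ Set.Icc (0:ℝ) R, ∀ x₁ x₂ : H, ‖x₁ - x₀‖ ≤ r → ‖x₂ - x₀‖ ≤ r →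
      ‖f' x₁ - f' x₂‖ ≤ ω r ‖x₁ - x₂‖)
    -- the fixed radius r ∈ (0, R] with μ(r) < 1
    (r : ℝ) (hr0 : 0 < r) (hrR : r ≤ R) (hμr : μ r < 1)
    -- the relaxation function d(r,·)
    (d : ℝ → ℝ)
    (hd : ∀ φ : ℝ, d φ = μ r * φ + ∫ τ in (0:ℝ)..(lam r * θ r * φ), ω r τ)
    -- φ_*(r): the smallest positive root of φ = d(r,φ)
    (φs : ℝ) (hφs_pos : 0 < φs) (hφs_root : d φs = φs)
    (hφs_min : ∀ ψ : ℝ, 0 < ψ → d ψ = ψ → φs ≤ ψ)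
    -- a = ‖f(x₀)‖, a < φ_*(r), and λ(r)θ(r)·w(r,a) ≤ r
    (a : ℝ) (ha : a = ‖f x₀‖) (haφs : a < φs)
    (hsum : Summable fun n : ℕ => d^[n] a)
    (hwa : lam r * θ r * ∑' n : ℕ, d^[n] a ≤ r)
    -- the iterative method
    (x : ℕ → H) (hx0 : x 0 = x₀)
    (hxiter : ∀ n : ℕ, x (n + 1) = x n - Λ (x n) (f (x n)) • (T (x n)) (f (x n))) :
    ∃ xs : H, f xs = 0 ∧ ‖xs - x₀‖ ≤ r ∧ Tendsto x atTop (𝓝 xs) ∧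
      (∀ n : ℕ, ‖x n - xs‖ ≤ lam r * θ r * ∑' k : ℕ, d^[k] ‖f (x n)‖) ∧
      (∀ n : ℕ, ‖x n - xs‖ ≤ lam r * θ r * ∑' k : ℕ, d^[k] (d^[n] a)) := by
  have hrm : r ∈ Set.Icc (0:ℝ) R := ⟨hr0.le, hrR⟩
  set c := lam r * θ r with hc_def
  have hc : 0 ≤ c := mul_nonneg (hlam0 r hrm) (hθ0 r hrm)
  -- `v` extends `ω r` from `[0, ∞)` to a monotone function on `ℝ`
  set v : ℝ → ℝ := fun t => ω r (max 0 t) with hv_def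
  have hv : Monotone v := fun s t hst =>
    hωmono r hrm (le_max_left 0 s) (le_max_left 0 t) (max_le_max le_rfl hst)
  have hv0 : ∀ t, 0 ≤ v t := fun t => hω0 r hrm _ (le_max_left 0 t)
  have hvω : ∀ t, 0 ≤ t → v t = ω r t := fun t ht => by simp [hv_def, max_eq_right ht]
  have hint : ∀ t, 0 ≤ t → ∫ τ in (0:ℝ)..t, ω r τ = ∫ τ in (0:ℝ)..t, v τ := fun t ht =>
    intervalIntegral.integral_congr fun τ hτ => by
      rw [Set.uIcc_of_le ht] at hτ
      exact (hvω τ hτ.1).symm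
  have hIntMono : ∀ s t : ℝ, 0 ≤ s → s ≤ t → ∫ τ in (0:ℝ)..s, v τ ≤ ∫ τ in (0:ℝ)..t, v τ :=
    fun s t hs hst => intervalIntegral.integral_mono_interval le_rfl hs hst
      (Eventually.of_forall hv0) hv.intervalIntegrable
  have hdv : ∀ φ, 0 ≤ φ → d φ = μ r * φ + ∫ τ in (0:ℝ)..(c * φ), v τ := fun φ hφ => by
    rw [hd, hint _ (mul_nonneg hc hφ)]
  have hdmono : ∀ s t, 0 ≤ s → s ≤ t → d s ≤ d t := fun s t hs hst => by
    rw [hdv s hs, hdv t (hs.trans hst)]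
    exact add_le_add (mul_le_mul_of_nonneg_left hst (hμ0 r hrm))
      (hIntMono _ _ (mul_nonneg hc hs) (mul_le_mul_of_nonneg_left hst hc))
  have hdnn : ∀ s, 0 ≤ s → 0 ≤ d s := fun s hs => by
    rw [hdv s hs]
    exact add_nonneg (mul_nonneg (hμ0 r hrm) hs)
      (intervalIntegral.integral_nonneg (mul_nonneg hc hs) fun t _ => hv0 t)
  have hitnn : ∀ s, 0 ≤ s → ∀ n, 0 ≤ d^[n] s := fun s hs n => by
    induction n with
    | zero => exact hs
    | succ n ih => rw [Function.iterate_succ_apply']; exact hdnn _ ih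
  have hitmono : ∀ s t, 0 ≤ s → s ≤ t → ∀ n, d^[n] s ≤ d^[n] t := fun s t hs hst n => by
    induction n with
    | zero => exact hst
    | succ n ih =>
      rw [Function.iterate_succ_apply', Function.iterate_succ_apply']
      exact hdmono _ _ (hitnn s hs n) ih
  have ha0 : 0 ≤ a := ha ▸ norm_nonneg _
  have hstep : ∀ n, ‖x n - x₀‖ ≤ r → ‖x (n + 1) - x n‖ ≤ c * ‖f (x n)‖ := fun n hn => by
    rw [hxiter, sub_sub_cancel_left, norm_neg, norm_smul, Real.norm_of_nonneg
      (hΛnonneg r hrm _ hn), hc_def, mul_assoc]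
    exact mul_le_mul (hΛbound r hrm _ hn)
      ((ContinuousLinearMap.le_opNorm _ _).trans
        (mul_le_mul_of_nonneg_right (hTbound r hrm _ hn) (norm_nonneg _)))
      (norm_nonneg _) (hlam0 r hrm)
  have hresid : ∀ n, ‖x n - x₀‖ ≤ r → ‖x (n + 1) - x₀‖ ≤ r →
      ‖f (x (n + 1))‖ ≤ d ‖f (x n)‖ := fun n hn hn1 => by
    set h := x (n + 1) - x n with hh
    have hxh : x n + h = x (n + 1) := by simp [hh]
    have hseg : ∀ t ∈ Set.Icc (0:ℝ) 1, ‖x n + t • h - x₀‖ ≤ r := fun t ht => by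
      have := (convex_closedBall x₀ r).add_smul_sub_mem
        (mem_closedBall_iff_norm.2 hn) (mem_closedBall_iff_norm.2 hn1) ht
      exact mem_closedBall_iff_norm.1 this
    have htaylor := norm_taylor_remainder_le_integral (f := f) (f' := f') hv (x := x n) (h := h)
      (fun t ht => hf _ ((hseg t ht).trans hrR))
      (fun t ht => by
        refine (hlip r hrm _ _ (hseg t ht) hn).trans (le_of_eq ?_)
        rw [add_sub_cancel_left, norm_smul, Real.norm_of_nonneg ht.1,
          hvω _ (mul_nonneg ht.1 (norm_nonneg _))])
    have hlin : ‖f (x n) + f' (x n) h‖ ≤ μ r * ‖f (x n)‖ := by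
      have h1 := hres r hrm _ hn
      have h2 : h = -(Λ (x n) (f (x n)) • (T (x n)) (f (x n))) := by
        rw [hh, hxiter, sub_sub_cancel_left]
      rwa [h2, map_neg, map_smul, ← sub_eq_add_neg]
    rw [hxh] at htaylor
    calc ‖f (x (n + 1))‖
        = ‖(f (x n) + f' (x n) h) + (f (x (n + 1)) - f (x n) - f' (x n) h)‖ := by
          congr 1; abel
      _ ≤ μ r * ‖f (x n)‖ + ∫ τ in (0:ℝ)..‖h‖, v τ := norm_add_le_of_le hlin htaylor
      _ ≤ μ r * ‖f (x n)‖ + ∫ τ in (0:ℝ)..(c * ‖f (x n)‖), v τ := by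
          gcongr
          exact hIntMono _ _ (norm_nonneg _) (hstep n hn)
      _ = d ‖f (x n)‖ := (hdv _ (norm_nonneg _)).symm
  have hpart : ∀ n, c * ∑ k ∈ Finset.range n, d^[k] a ≤ r := fun n =>
    (mul_le_mul_of_nonneg_left (hsum.sum_le_tsum _ fun k _ => hitnn a ha0 k) hc).trans hwa
  have hmain : ∀ n, ‖x n - x₀‖ ≤ c * ∑ k ∈ Finset.range n, d^[k] a ∧ ‖f (x n)‖ ≤ d^[n] a := by
    intro n
    induction n with
    | zero => simp [hx0, ha]
    | succ n ih =>
      have hn := ih.1.trans (hpart n)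
      have h1 : ‖x (n + 1) - x₀‖ ≤ c * ∑ k ∈ Finset.range (n + 1), d^[k] a := by
        rw [Finset.sum_range_succ, mul_add, ← sub_add_sub_cancel (x (n + 1)) (x n) x₀, add_comm]
        exact norm_add_le_of_le ih.1
          ((hstep n hn).trans (mul_le_mul_of_nonneg_left ih.2 hc))
      refine ⟨h1, ?_⟩
      rw [Function.iterate_succ_apply']
      exact (hresid n hn (h1.trans (hpart _))).trans (hdmono _ _ (norm_nonneg _) ih.2)
  have hball : ∀ n, ‖x n - x₀‖ ≤ r := fun n => (hmain n).1.trans (hpart n)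
  have hfn : ∀ n k, ‖f (x (n + k))‖ ≤ d^[k] ‖f (x n)‖ := fun n k => by
    induction k with
    | zero => exact le_rfl
    | succ k ih =>
      rw [Function.iterate_succ_apply']
      exact (hresid (n + k) (hball _) (hball _)).trans (hdmono _ _ (norm_nonneg _) ih)
  have hsum2 : ∀ n, Summable fun k : ℕ => d^[k] (d^[n] a) := fun n => by
    simpa only [Function.iterate_add_apply] using (summable_nat_add_iff n).2 hsum
  have hsum1 : ∀ n, Summable fun k : ℕ => d^[k] ‖f (x n)‖ := fun n =>
    (hsum2 n).of_nonneg_of_le (hitnn _ (norm_nonneg _))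
      (hitmono _ _ (norm_nonneg _) (hmain n).2)
  have hdist : ∀ n k, dist (x (n + k)) (x (n + (k + 1))) ≤ c * d^[k] ‖f (x n)‖ := fun n k => by
    rw [dist_comm, dist_eq_norm]
    exact (hstep (n + k) (hball _)).trans (mul_le_mul_of_nonneg_left (hfn n k) hc)
  have hcau : CauchySeq x := by
    refine cauchySeq_of_dist_le_of_summable _ (fun k => ?_) ((hsum1 0).mul_left c)
    simpa only [zero_add] using hdist 0 k
  obtain ⟨xs, hxs⟩ := cauchySeq_tendsto_of_complete hcau
  have hxsr : ‖xs - x₀‖ ≤ r :=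
    le_of_tendsto (hxs.sub_const x₀).norm (Eventually.of_forall hball)
  have hpost : ∀ n, ‖x n - xs‖ ≤ c * ∑' k : ℕ, d^[k] ‖f (x n)‖ := fun n => by
    have hlim : Tendsto (fun k => x (n + k)) atTop (𝓝 xs) := by
      simpa only [add_comm n] using (tendsto_add_atTop_iff_nat n).2 hxs
    have := dist_le_tsum_of_dist_le_of_tendsto₀ (f := fun k => x (n + k)) _ (hdist n)
      ((hsum1 n).mul_left c) hlim
    rwa [tsum_mul_left, dist_eq_norm] at this
  refine ⟨xs, ?_, hxsr, hxs, hpost, fun n => (hpost n).trans ?_⟩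
  · have h1 : Tendsto (fun n => f (x n)) atTop (𝓝 (f xs)) :=
      (hf xs (hxsr.trans hrR)).continuousAt.tendsto.comp hxs
    have h2 : Tendsto (fun n => f (x n)) atTop (𝓝 0) :=
      squeeze_zero_norm (fun n => (hmain n).2) hsum.tendsto_atTop_zero
    exact tendsto_nhds_unique h1 h2
  · exact mul_le_mul_of_nonneg_left ((hsum1 n).tsum_le_tsum
      (hitmono _ _ (norm_nonneg _) (hmain n).2) (hsum2 n)) hc
end

section
/- Under the stated framework, fix r ∈ (0,R] and let x with ‖x − x₀‖ ≤ r, and set x' = x − Λ(x, f(x)) T(x) f(x). If ‖x' − x₀‖ ≤ r as well, then ‖x' − x‖ ≤ λ(r)θ(r)‖f(x)‖ and ‖f(x')‖ ≤ d(r, ‖f(x)‖) = μ(r)‖f(x)‖ + Ω(r, λ(r)θ(r)‖f(x)‖). -/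
open MeasureTheory

/-!
Write `h = x' - x = -Λ T f(x)`. Then
`f(x') = (f(x) - Λ f'(x) T f(x)) + (f(x') - f(x) - f'(x) h)`.
The first summand is at most `μ(r)‖f(x)‖` by the residual hypothesis, and the Taylor remainder is
at most `Ω(r, ‖h‖) ≤ Ω(r, λ(r)θ(r)‖f(x)‖)`.

Since `f'` need not be continuous, the remainder is not estimated by integrating `f'` along the
segment. Instead a mean value inequality is used in which the norm of the derivative is dominated
by a monotone function `u`: the primitive of `u` has right derivative `u(t+) ≥ u(t)` at every
point, which is all the comparison theorem for right derivatives requires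
(`norm_sub_le_integral_of_monotone`, `norm_taylor_remainder_le`).
-/

/-- Mean value inequality with a monotone, possibly discontinuous, bound on the derivative. -/
theorem norm_sub_le_integral_of_monotone {E : Type*} [NormedAddCommGroup E] [NormedSpace ℝ E]
    {u : ℝ → ℝ} (hu : Monotone u) {g g' : ℝ → E}
    (hg : ∀ t ∈ Set.Icc (0:ℝ) 1, HasDerivAt g (g' t) t)
    (hb : ∀ t ∈ Set.Icc (0:ℝ) 1, ‖g' t‖ ≤ u t) :
    ‖g 1 - g 0‖ ≤ ∫ s in (0:ℝ)..1, u s := by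
  have hint : ∀ a b : ℝ, IntervalIntegrable u volume a b := fun a b => hu.intervalIntegrable
  have hB : ∀ t, HasDerivWithinAt (fun t => ∫ s in (0:ℝ)..t, u s) (Function.rightLim u t)
      (Set.Ici t) t := fun t =>
    intervalIntegral.integral_hasDerivWithinAt_of_tendsto_ae_right (hint 0 t)
      (hu.measurable.stronglyMeasurable.stronglyMeasurableAtFilter)
      ((hu.tendsto_rightLim t).mono_left inf_le_left)
  refine image_norm_le_of_norm_deriv_right_le_deriv_boundary' (a := 0) (b := 1)
    (f := fun t => g t - g 0) (f' := g') (B := fun t => ∫ s in (0:ℝ)..t, u s)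
    (B' := Function.rightLim u) ?_ ?_ ?_ ?_ ?_ ?_ (Set.right_mem_Icc.2 zero_le_one)
  · exact fun t ht => ((hg t ht).continuousAt.sub continuousAt_const).continuousWithinAt
  · exact fun t ht => ((hg t (Set.Ico_subset_Icc_self ht)).sub_const _).hasDerivWithinAt
  · simp
  · exact (intervalIntegral.continuous_primitive hint 0).continuousOn
  · exact fun t _ => hB t
  · exact fun t ht => (hb t (Set.Ico_subset_Icc_self ht)).trans (hu.le_rightLim le_rfl)

/-- First-order Taylor remainder bound on a convex set when `w` is a monotone modulus of
continuity for the derivative. -/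
theorem norm_taylor_remainder_le {E F : Type*} [NormedAddCommGroup E] [NormedSpace ℝ E]
    [NormedAddCommGroup F] [NormedSpace ℝ F] {f : E → F} {f' : E → E →L[ℝ] F} {S : Set E}
    (hS : Convex ℝ S) (hf : ∀ y ∈ S, HasFDerivAt f (f' y) y) {w : ℝ → ℝ}
    (hw : MonotoneOn w (Set.Ici 0))
    (hlip : ∀ y ∈ S, ∀ z ∈ S, ‖f' y - f' z‖ ≤ w ‖y - z‖)
    {x y : E} (hx : x ∈ S) (hy : y ∈ S) :
    ‖f y - f x - f' x (y - x)‖ ≤ ∫ τ in (0:ℝ)..‖y - x‖, w τ := by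
  set h := y - x with hh
  -- Freezing `w` to the left of `0` makes it monotone on the whole line.
  have hu : Monotone fun s : ℝ => w (max (s * ‖h‖) 0) * ‖h‖ := fun a b hab =>
    mul_le_mul_of_nonneg_right (hw (Set.mem_Ici.2 (le_max_right _ _)) (Set.mem_Ici.2 (le_max_right _ _))
      (max_le_max (mul_le_mul_of_nonneg_right hab (norm_nonneg _)) le_rfl)) (norm_nonneg _)
  have hmem : ∀ t ∈ Set.Icc (0:ℝ) 1, x + t • h ∈ S := fun t ht =>
    hS.add_smul_sub_mem hx hy ht
  have key := norm_sub_le_integral_of_monotone hu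
    (g := fun t => f (x + t • h) - t • f' x h) (g' := fun t => f' (x + t • h) h - f' x h)
    (fun t ht => by
      have h1 : HasDerivAt (fun t : ℝ => x + t • h) h t := by
        simpa using ((hasDerivAt_id t).smul_const h).const_add x
      have h2 : HasDerivAt (fun t : ℝ => t • f' x h) (f' x h) t := by
        simpa using (hasDerivAt_id t).smul_const (f' x h)
      exact ((hf _ (hmem t ht)).comp_hasDerivAt t h1).sub h2)
    (fun t ht => by
      have h3 := hlip _ (hmem t ht) x hx
      rw [add_sub_cancel_left, norm_smul, Real.norm_of_nonneg ht.1] at h3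
      rw [max_eq_left (mul_nonneg ht.1 (norm_nonneg _)), ← sub_apply]
      exact ((f' (x + t • h) - f' x).le_opNorm h).trans
        (mul_le_mul_of_nonneg_right h3 (norm_nonneg _)))
  have hI : ∫ s in (0:ℝ)..1, w (max (s * ‖h‖) 0) * ‖h‖ = ∫ τ in (0:ℝ)..‖h‖, w τ := by
    rw [intervalIntegral.integral_mul_const, mul_comm,
      intervalIntegral.mul_integral_comp_mul_right (f := fun s => w (max s 0))]
    simp only [zero_mul, one_mul]
    refine intervalIntegral.integral_congr fun s hs => ?_
    rw [Set.uIcc_of_le (norm_nonneg _)] at hs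
    simp only [max_eq_left hs.1]
  rw [hI] at key
  have e : f y - f x - f' x h
      = (f (x + (1:ℝ) • h) - (1:ℝ) • f' x h) - (f (x + (0:ℝ) • h) - (0:ℝ) • f' x h) := by
    simp only [one_smul, zero_smul, add_zero, sub_zero, hh, add_sub_cancel]
    abel
  rw [e]
  exact key

/-- a single step of the gradient-like method satisfies
`‖x' − x‖ ≤ λ(r)θ(r)‖f(x)‖` and the relaxation inequality `‖f(x')‖ ≤ d(r,‖f(x)‖)`. -/
theorem gradient_like_one_step
    {H : Type*} [NormedAddCommGroup H] [InnerProductSpace ℝ H] [CompleteSpace H]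
    (x₀ : H) (R : ℝ) (hR : 0 < R)
    (f : H → H) (f' : H → H →L[ℝ] H)
    (hf : ∀ x : H, ‖x - x₀‖ ≤ R → HasFDerivAt f (f' x) x)
    (T : H → H →L[ℝ] H) (Λ : H → H → ℝ)
    (lam θ μ : ℝ → ℝ) (ω : ℝ → ℝ → ℝ)
    (hlam0 : ∀ r ∈ Set.Icc (0:ℝ) R, 0 ≤ lam r)
    (hθ0 : ∀ r ∈ Set.Icc (0:ℝ) R, 0 ≤ θ r)
    (hμ0 : ∀ r ∈ Set.Icc (0:ℝ) R, 0 ≤ μ r)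
    (hω0 : ∀ r ∈ Set.Icc (0:ℝ) R, ∀ t, 0 ≤ t → 0 ≤ ω r t)
    (hωmono : ∀ r ∈ Set.Icc (0:ℝ) R, MonotoneOn (ω r) (Set.Ici 0))
    (hωint : ∀ r ∈ Set.Icc (0:ℝ) R, ∀ t : ℝ, IntervalIntegrable (ω r) volume 0 t)
    (hΛnonneg : ∀ r ∈ Set.Icc (0:ℝ) R, ∀ x : H, ‖x - x₀‖ ≤ r → 0 ≤ Λ x (f x))
    (hΛbound : ∀ r ∈ Set.Icc (0:ℝ) R, ∀ x : H, ‖x - x₀‖ ≤ r → Λ x (f x) ≤ lam r)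
    (hTbound : ∀ r ∈ Set.Icc (0:ℝ) R, ∀ x : H, ‖x - x₀‖ ≤ r → ‖T x‖ ≤ θ r)
    (hres : ∀ r ∈ Set.Icc (0:ℝ) R, ∀ x : H, ‖x - x₀‖ ≤ r →
      ‖f x - Λ x (f x) • (f' x) ((T x) (f x))‖ ≤ μ r * ‖f x‖)
    (hlip : ∀ r ∈ Set.Icc (0:ℝ) R, ∀ x₁ x₂ : H, ‖x₁ - x₀‖ ≤ r → ‖x₂ - x₀‖ ≤ r →
      ‖f' x₁ - f' x₂‖ ≤ ω r ‖x₁ - x₂‖)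
    (r : ℝ) (hr0 : 0 < r) (hrR : r ≤ R)
    (x x' : H) (hx : ‖x - x₀‖ ≤ r)
    (hx' : x' = x - Λ x (f x) • (T x) (f x))
    (hx'r : ‖x' - x₀‖ ≤ r) :
    ‖x' - x‖ ≤ lam r * θ r * ‖f x‖ ∧
      ‖f x'‖ ≤ μ r * ‖f x‖ + ∫ τ in (0:ℝ)..(lam r * θ r * ‖f x‖), ω r τ := by
  have hr : r ∈ Set.Icc (0:ℝ) R := ⟨hr0.le, hrR⟩
  have hstep : x' - x = -(Λ x (f x) • T x (f x)) := by rw [hx']; abel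
  have h1 : ‖x' - x‖ ≤ lam r * θ r * ‖f x‖ := by
    rw [hstep, norm_neg, norm_smul, Real.norm_of_nonneg (hΛnonneg r hr x hx), mul_assoc]
    exact mul_le_mul (hΛbound r hr x hx) ((T x).le_of_opNorm_le (hTbound r hr x hx) _)
      (norm_nonneg _) (hlam0 r hr)
  refine ⟨h1, ?_⟩
  have hball : ∀ y, y ∈ Metric.closedBall x₀ r ↔ ‖y - x₀‖ ≤ r := fun y =>
    mem_closedBall_iff_norm
  have hrem := norm_taylor_remainder_le (convex_closedBall x₀ r)
    (fun y hy => hf y (((hball y).1 hy).trans hrR)) (hωmono r hr)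
    (fun y hy z hz => hlip r hr y z ((hball y).1 hy) ((hball z).1 hz))
    ((hball x).2 hx) ((hball x').2 hx'r)
  have hmono : ∫ τ in (0:ℝ)..‖x' - x‖, ω r τ
      ≤ ∫ τ in (0:ℝ)..(lam r * θ r * ‖f x‖), ω r τ := by
    refine intervalIntegral.integral_mono_interval le_rfl (norm_nonneg _) h1 ?_ (hωint r hr _)
    filter_upwards [ae_restrict_mem measurableSet_Ioc] with τ hτ using hω0 r hr τ hτ.1.le
  have hsplit : f x' = (f x - Λ x (f x) • f' x (T x (f x)))
      + (f x' - f x - f' x (x' - x)) := by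
    rw [hstep, map_neg, map_smul]; abel
  rw [hsplit]
  exact (norm_add_le _ _).trans (add_le_add (hres r hr x hx) (hrem.trans hmono))
end

section
/- Under the stated framework, fix r ∈ (0,R] with μ(r) < 1, let φ_*(r) be the smallest positive root of φ = d(r,φ) (assumed to exist), set a = ‖f(x₀)‖, and assume a < φ_*(r) and λ(r)θ(r)·w(r,a) ≤ r. Then for every n = 0,1,2,… the iterates satisfy ‖x_n − x₀‖ ≤ r and ‖f(x_n)‖ ≤ d⁽ⁿ⁾(r,a). -/
/-!
The proof is an induction carrying the a priori bound `‖xₙ - x₀‖ ≤ λθ · ∑_{k<n} d⁽ᵏ⁾(a)` next to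
`‖f(xₙ)‖ ≤ d⁽ⁿ⁾(a)`. A step has length at most `λθ‖f(xₙ)‖ ≤ λθ d⁽ⁿ⁾(a)`, which extends the
partial sum by one term; since the partial sums stay below `w(a)`, the next iterate is again in the
ball of radius `r`. Writing `h = xₙ₊₁ - xₙ`, one has
`f(xₙ₊₁) = (f(xₙ) + f'(xₙ)h) + (f(xₙ + h) - f(xₙ) - f'(xₙ)h)`: the first bracket is at most
`μ‖f(xₙ)‖` by the residual condition, and the second at most `∫₀^‖h‖ ω` by the Taylor estimate
`norm_taylor_remainder_le`. Both bounds are monotone in `‖f(xₙ)‖` and `‖h‖`, which gives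
`‖f(xₙ₊₁)‖ ≤ d(d⁽ⁿ⁾(a))`.
-/

open Filter Topology MeasureTheory
open scoped RealInnerProductSpace

/-- First-order Taylor estimate under the modulus of continuity `w` of the derivative. As `w` need
not vanish at `0`, the derivative may be discontinuous, so the remainder is paired with a fixed
vector and the one-sided form of the fundamental theorem of calculus, which asks for integrability
of the bound only, is applied to the resulting scalar function. -/
theorem norm_taylor_remainder_le_s5
    {H : Type*} [NormedAddCommGroup H] [InnerProductSpace ℝ H]
    {f : H → H} {f' : H → H →L[ℝ] H} {w : ℝ → ℝ} {y h : H}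
    (hf : ∀ s ∈ Set.Icc (0:ℝ) 1, HasFDerivAt f (f' (y + s • h)) (y + s • h))
    (hw0 : ∀ t, 0 ≤ t → 0 ≤ w t) (hw : MonotoneOn w (Set.Ici 0))
    (hlip : ∀ s ∈ Set.Icc (0:ℝ) 1, ‖f' (y + s • h) - f' y‖ ≤ w ‖s • h‖) :
    ‖f (y + h) - f y - f' y h‖ ≤ ∫ τ in (0:ℝ)..‖h‖, w τ := by
  set v := f (y + h) - f y - f' y h with hv
  have hderiv : ∀ s ∈ Set.Icc (0:ℝ) 1,
      HasDerivAt (fun s : ℝ => ⟪v, f (y + s • h) - s • f' y h⟫)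
        ⟪v, (f' (y + s • h) - f' y) h⟫ s := by
    intro s hs
    have h1 : HasDerivAt (fun s : ℝ => y + s • h) h s := by
      simpa using ((hasDerivAt_id s).smul_const h).const_add y
    have h2 := (hf s hs).comp_hasDerivAt s h1
    have h3 : HasDerivAt (fun s : ℝ => s • f' y h) (f' y h) s := by
      simpa using (hasDerivAt_id s).smul_const (f' y h)
    simpa using (hasDerivAt_const s v).inner ℝ (h2.sub h3)
  have hmono : MonotoneOn (fun s : ℝ => w (‖h‖ * s)) (Set.Icc 0 1) := by
    intro s hs t ht hst
    exact hw (mul_nonneg (norm_nonneg _) hs.1) (mul_nonneg (norm_nonneg _) ht.1)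
      (mul_le_mul_of_nonneg_left hst (norm_nonneg _))
  have hint : IntegrableOn (fun s : ℝ => ‖v‖ * (‖h‖ * w (‖h‖ * s))) (Set.Icc 0 1) :=
    ((hmono.integrableOn_isCompact isCompact_Icc).const_mul _).const_mul _
  have key := intervalIntegral.sub_le_integral_of_hasDeriv_right_of_le zero_le_one
    (fun s hs => (hderiv s hs).continuousAt.continuousWithinAt)
    (fun s hs => (hderiv s (Set.Ioo_subset_Icc_self hs)).hasDerivWithinAt) hint
    (fun s hs => by
      have hs' := Set.Ioo_subset_Icc_self hs
      have hl := hlip s hs'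
      rw [norm_smul, Real.norm_of_nonneg hs'.1, mul_comm] at hl
      calc ⟪v, (f' (y + s • h) - f' y) h⟫ ≤ ‖v‖ * ‖(f' (y + s • h) - f' y) h‖ :=
            real_inner_le_norm _ _
        _ ≤ ‖v‖ * (w (‖h‖ * s) * ‖h‖) := by
            gcongr
            exact ContinuousLinearMap.le_of_opNorm_le _ hl _
        _ = ‖v‖ * (‖h‖ * w (‖h‖ * s)) := by ring)
  have hL : ⟪v, f (y + (1:ℝ) • h) - (1:ℝ) • f' y h⟫ - ⟪v, f (y + (0:ℝ) • h) - (0:ℝ) • f' y h⟫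
      = ‖v‖ * ‖v‖ := by
    rw [← inner_sub_right, ← real_inner_self_eq_norm_mul_norm]
    congr 1
    simp only [hv, one_smul, zero_smul, add_zero, sub_zero]
    abel
  rw [hL, intervalIntegral.integral_const_mul, intervalIntegral.integral_const_mul,
    intervalIntegral.mul_integral_comp_mul_left, mul_zero, mul_one] at key
  rcases (norm_nonneg v).eq_or_lt with h0 | h0
  · rw [← h0]
    exact intervalIntegral.integral_nonneg (norm_nonneg h) fun t ht => hw0 t ht.1
  · exact le_of_mul_le_mul_left key h0

/-- the iterates of the gradient-like method stay in the ball of radius `r`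
and the residuals satisfy `‖f(xₙ)‖ ≤ d⁽ⁿ⁾(r,a)`. -/
theorem gradient_like_iterates_stay_in_ball
    {H : Type*} [NormedAddCommGroup H] [InnerProductSpace ℝ H] [CompleteSpace H]
    (x₀ : H) (R : ℝ) (hR : 0 < R)
    (f : H → H) (f' : H → H →L[ℝ] H)
    (hf : ∀ x : H, ‖x - x₀‖ ≤ R → HasFDerivAt f (f' x) x)
    (T : H → H →L[ℝ] H) (Λ : H → H → ℝ)
    (lam θ μ : ℝ → ℝ) (ω : ℝ → ℝ → ℝ)
    (hlam0 : ∀ r ∈ Set.Icc (0:ℝ) R, 0 ≤ lam r)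
    (hθ0 : ∀ r ∈ Set.Icc (0:ℝ) R, 0 ≤ θ r)
    (hμ0 : ∀ r ∈ Set.Icc (0:ℝ) R, 0 ≤ μ r)
    (hω0 : ∀ r ∈ Set.Icc (0:ℝ) R, ∀ t, 0 ≤ t → 0 ≤ ω r t)
    (hωmono : ∀ r ∈ Set.Icc (0:ℝ) R, MonotoneOn (ω r) (Set.Ici 0))
    (hωint : ∀ r ∈ Set.Icc (0:ℝ) R, ∀ t : ℝ, IntervalIntegrable (ω r) volume 0 t)
    -- condition (i): bounds on the relaxation functional and on `T`
    (hΛnonneg : ∀ r ∈ Set.Icc (0:ℝ) R, ∀ x : H, ‖x - x₀‖ ≤ r → 0 ≤ Λ x (f x))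
    (hΛbound : ∀ r ∈ Set.Icc (0:ℝ) R, ∀ x : H, ‖x - x₀‖ ≤ r → Λ x (f x) ≤ lam r)
    (hTbound : ∀ r ∈ Set.Icc (0:ℝ) R, ∀ x : H, ‖x - x₀‖ ≤ r → ‖T x‖ ≤ θ r)
    -- condition (ii): residual contraction
    (hres : ∀ r ∈ Set.Icc (0:ℝ) R, ∀ x : H, ‖x - x₀‖ ≤ r →
      ‖f x - Λ x (f x) • (f' x) ((T x) (f x))‖ ≤ μ r * ‖f x‖)
    -- condition (iii): continuity of the derivative
    (hlip : ∀ r ∈ Set.Icc (0:ℝ) R, ∀ x₁ x₂ : H, ‖x₁ - x₀‖ ≤ r → ‖x₂ - x₀‖ ≤ r →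
      ‖f' x₁ - f' x₂‖ ≤ ω r ‖x₁ - x₂‖)
    -- the fixed radius r ∈ (0, R] with μ(r) < 1
    (r : ℝ) (hr0 : 0 < r) (hrR : r ≤ R) (hμr : μ r < 1)
    -- the relaxation function d(r,·)
    (d : ℝ → ℝ)
    (hd : ∀ φ : ℝ, d φ = μ r * φ + ∫ τ in (0:ℝ)..(lam r * θ r * φ), ω r τ)
    -- φ_*(r): the smallest positive root of φ = d(r,φ)
    (φs : ℝ) (hφs_pos : 0 < φs) (hφs_root : d φs = φs)
    (hφs_min : ∀ ψ : ℝ, 0 < ψ → d ψ = ψ → φs ≤ ψ)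
    -- a = ‖f(x₀)‖, a < φ_*(r), and λ(r)θ(r)·w(r,a) ≤ r
    (a : ℝ) (ha : a = ‖f x₀‖) (haφs : a < φs)
    (hsum : Summable fun n : ℕ => d^[n] a)
    (hwa : lam r * θ r * ∑' n : ℕ, d^[n] a ≤ r)
    -- the iterative method
    (x : ℕ → H) (hx0 : x 0 = x₀)
    (hxiter : ∀ n : ℕ, x (n + 1) = x n - Λ (x n) (f (x n)) • (T (x n)) (f (x n))) :
    ∀ n : ℕ, ‖x n - x₀‖ ≤ r ∧ ‖f (x n)‖ ≤ d^[n] a := by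
  have hr : r ∈ Set.Icc (0:ℝ) R := ⟨hr0.le, hrR⟩
  have hc : 0 ≤ lam r * θ r := mul_nonneg (hlam0 r hr) (hθ0 r hr)
  have hΩmono : ∀ s t : ℝ, 0 ≤ s → s ≤ t → ∫ τ in (0:ℝ)..s, ω r τ ≤ ∫ τ in (0:ℝ)..t, ω r τ := by
    intro s t hs hst
    rw [← intervalIntegral.integral_add_adjacent_intervals (hωint r hr s)
      ((hωint r hr s).symm.trans (hωint r hr t))]
    exact le_add_of_nonneg_right
      (intervalIntegral.integral_nonneg hst fun τ hτ => hω0 r hr τ (hs.trans hτ.1))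
  have hd0 : ∀ φ, 0 ≤ φ → 0 ≤ d φ := by
    intro φ hφ
    rw [hd]
    exact add_nonneg (mul_nonneg (hμ0 r hr) hφ)
      (intervalIntegral.integral_nonneg (mul_nonneg hc hφ) fun τ hτ => hω0 r hr τ hτ.1)
  have hiter0 : ∀ n, 0 ≤ d^[n] a := by
    intro n
    induction n with
    | zero => simp [ha]
    | succ n ih => rw [Function.iterate_succ_apply']; exact hd0 _ ih
  have hpartial : ∀ n, lam r * θ r * ∑ k ∈ Finset.range n, d^[k] a ≤ r := fun n =>
    (mul_le_mul_of_nonneg_left (hsum.sum_le_tsum _ fun k _ => hiter0 k) hc).trans hwa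
  have main : ∀ n, ‖x n - x₀‖ ≤ lam r * θ r * ∑ k ∈ Finset.range n, d^[k] a ∧
      ‖f (x n)‖ ≤ d^[n] a := by
    intro n
    induction n with
    | zero => simp [hx0, ha]
    | succ n ih =>
      obtain ⟨ih1, ih2⟩ := ih
      have hxn : ‖x n - x₀‖ ≤ r := ih1.trans (hpartial n)
      set h : H := -(Λ (x n) (f (x n)) • (T (x n)) (f (x n))) with hh
      have hstep : x (n + 1) = x n + h := by rw [hxiter, hh, sub_eq_add_neg]
      have hnorm : ‖h‖ ≤ lam r * θ r * d^[n] a := by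
        have hΛ := hΛnonneg r hr _ hxn
        rw [hh, norm_neg, norm_smul, Real.norm_of_nonneg hΛ, mul_assoc]
        refine mul_le_mul (hΛbound r hr _ hxn) ?_ (norm_nonneg _) (hlam0 r hr)
        exact (ContinuousLinearMap.le_of_opNorm_le _ (hTbound r hr _ hxn) _).trans
          (mul_le_mul_of_nonneg_left ih2 (hθ0 r hr))
      have hpos : ‖x (n + 1) - x₀‖ ≤ lam r * θ r * ∑ k ∈ Finset.range (n + 1), d^[k] a := by
        rw [hstep, add_sub_right_comm, Finset.sum_range_succ, mul_add]
        exact (norm_add_le _ _).trans (add_le_add ih1 hnorm)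
      refine ⟨hpos, ?_⟩
      have hxn1 : ‖x n + h - x₀‖ ≤ r := hstep ▸ hpos.trans (hpartial (n + 1))
      have hseg : ∀ s ∈ Set.Icc (0:ℝ) 1, ‖x n + s • h - x₀‖ ≤ r := by
        intro s hs
        have hmem := (convex_closedBall x₀ r).add_smul_mem
          (mem_closedBall_iff_norm.2 hxn) (mem_closedBall_iff_norm.2 hxn1) hs
        exact mem_closedBall_iff_norm.1 hmem
      have htaylor : ‖f (x n + h) - f (x n) - f' (x n) h‖ ≤ ∫ τ in (0:ℝ)..‖h‖, ω r τ :=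
        norm_taylor_remainder_le_s5 (fun s hs => hf _ ((hseg s hs).trans hrR)) (hω0 r hr)
          (hωmono r hr) fun s hs => by
            simpa using hlip r hr _ _ (hseg s hs) hxn
      have hlin : ‖f (x n) + f' (x n) h‖ ≤ μ r * ‖f (x n)‖ := by
        simpa [hh, sub_eq_add_neg] using hres r hr _ hxn
      rw [Function.iterate_succ_apply', hd, hstep]
      calc ‖f (x n + h)‖
          = ‖(f (x n) + f' (x n) h) + (f (x n + h) - f (x n) - f' (x n) h)‖ := by
            congr 1; abel
        _ ≤ μ r * ‖f (x n)‖ + ∫ τ in (0:ℝ)..‖h‖, ω r τ :=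
            (norm_add_le _ _).trans (add_le_add hlin htaylor)
        _ ≤ μ r * d^[n] a + ∫ τ in (0:ℝ)..(lam r * θ r * d^[n] a), ω r τ :=
            add_le_add (mul_le_mul_of_nonneg_left ih2 (hμ0 r hr))
              (hΩmono _ _ (norm_nonneg h) hnorm)
  exact fun n => ⟨(main n).1.trans (hpartial n), (main n).2⟩
end

section
/- Let d : [0,∞) → [0,∞) be nondecreasing and convex with d(0) = 0, and let φ > 0 satisfy d(φ) < φ. Then the series w(φ) = Σ_{n=0}^∞ d⁽ⁿ⁾(φ) converges, the series w(d(φ)) = Σ_{n=0}^∞ d⁽ⁿ⁾(d(φ)) converges, and w(φ) = φ + w(d(φ)). -/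
/-! Convexity and `d 0 = 0` put the graph of `d` on `[0, φ]` below the chord from the origin to
`(φ, d φ)`, so `d t ≤ r * t` there with slope `r = d φ / φ < 1`. Hence `d` maps `[0, φ]` to itself
and the iterates satisfy `0 ≤ d^[n] φ ≤ r ^ n * φ`: the series is dominated by a geometric one.
The second series is the first with its leading term `φ` removed. -/

/-- for a nondecreasing convex function `d : [0,∞) → [0,∞)` with `d(0) = 0`
and `d(φ) < φ`, the series `w(φ) = Σ d⁽ⁿ⁾(φ)` and `w(d(φ)) = Σ d⁽ⁿ⁾(d(φ))` converge and
`w(φ) = φ + w(d(φ))`. -/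
theorem relaxation_series_functional_equation
    (d : ℝ → ℝ)
    (hd0 : ∀ t : ℝ, 0 ≤ t → 0 ≤ d t)
    (hmono : MonotoneOn d (Set.Ici (0:ℝ)))
    (hconv : ConvexOn ℝ (Set.Ici (0:ℝ)) d)
    (hdzero : d 0 = 0)
    (φ : ℝ) (hφ : 0 < φ) (hdφ : d φ < φ) :
    (Summable fun n : ℕ => d^[n] φ) ∧ (Summable fun n : ℕ => d^[n] (d φ)) ∧
      (∑' n : ℕ, d^[n] φ) = φ + ∑' n : ℕ, d^[n] (d φ) := by
  have hr0 : 0 ≤ d φ / φ := div_nonneg (hd0 φ hφ.le) hφ.le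
  have hr1 : d φ / φ < 1 := (div_lt_one hφ).2 hdφ
  have chord : ∀ t, 0 ≤ t → t ≤ φ → d t ≤ d φ / φ * t := by
    intro t ht htφ
    have h := hconv.2 (Set.mem_Ici.2 hφ.le) (Set.mem_Ici.2 le_rfl)
      (div_nonneg ht hφ.le) (sub_nonneg.2 ((div_le_one hφ).2 htφ)) (add_sub_cancel (t / φ) 1)
    simp only [smul_eq_mul, mul_zero, add_zero, hdzero, div_mul_cancel₀ t hφ.ne'] at h
    exact h.trans_eq (by ring)
  have bound : ∀ n : ℕ, 0 ≤ d^[n] φ ∧ d^[n] φ ≤ (d φ / φ) ^ n * φ := by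
    intro n
    induction n with
    | zero => simp [hφ.le]
    | succ n ih =>
      obtain ⟨h0, h1⟩ := ih
      have hle : d^[n] φ ≤ φ :=
        h1.trans (mul_le_of_le_one_left hφ.le (pow_le_one₀ hr0 hr1.le))
      rw [Function.iterate_succ_apply']
      refine ⟨hd0 _ h0, (chord _ h0 hle).trans ?_⟩
      rw [pow_succ', mul_assoc]
      exact mul_le_mul_of_nonneg_left h1 hr0
  have hs : Summable fun n : ℕ => d^[n] φ :=
    Summable.of_nonneg_of_le (fun n => (bound n).1) (fun n => (bound n).2)
      ((summable_geometric_of_lt_one hr0 hr1).mul_right φ)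
  refine ⟨hs, ?_, ?_⟩
  · simpa only [Function.iterate_succ_apply] using (summable_nat_add_iff 1).2 hs
  · simpa only [Function.iterate_succ_apply, Function.iterate_zero_apply] using hs.tsum_eq_zero_add
end

section
/- Let d : [0,∞) → [0,∞) be nondecreasing and convex with d(0) = 0, and let φ > 0 satisfy d(φ) < φ. Then the series w(φ) = Σ_{n=0}^∞ d⁽ⁿ⁾(φ) converges and satisfies w(φ) ≤ φ² / (φ − d(φ)). -/
/-!
Put `r = d φ / φ < 1`. By convexity and `d 0 = 0`, the graph of `d` on `[0, φ]` lies below the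
chord from the origin, so `d t ≤ r * t` there. Hence the iterates stay in `[0, φ]` and
`d^[n] φ ≤ r ^ n * φ`; the series is dominated by the geometric one, whose sum is
`φ / (1 - r) = φ ^ 2 / (φ - d φ)`.
-/

/-- for a nondecreasing convex function `d : [0,∞) → [0,∞)` with `d(0) = 0`
and `d(φ) < φ`, the series `w(φ) = Σ d⁽ⁿ⁾(φ)` converges and `w(φ) ≤ φ²/(φ − d(φ))`. -/
theorem relaxation_series_bound
    (d : ℝ → ℝ)
    (hd0 : ∀ t : ℝ, 0 ≤ t → 0 ≤ d t)
    (hmono : MonotoneOn d (Set.Ici (0:ℝ)))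
    (hconv : ConvexOn ℝ (Set.Ici (0:ℝ)) d)
    (hdzero : d 0 = 0)
    (φ : ℝ) (hφ : 0 < φ) (hdφ : d φ < φ) :
    (Summable fun n : ℕ => d^[n] φ) ∧
      (∑' n : ℕ, d^[n] φ) ≤ φ ^ 2 / (φ - d φ) := by
  set r : ℝ := d φ / φ with hr
  have hr0 : 0 ≤ r := div_nonneg (hd0 φ hφ.le) hφ.le
  have hr1 : r < 1 := (div_lt_one hφ).2 hdφ
  have hchord : ∀ t, 0 ≤ t → t ≤ φ → d t ≤ r * t := by
    intro t ht htφ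
    -- `t` is the convex combination of `φ` and `0` with weight `t / φ` on `φ`.
    have h := hconv.2 (Set.mem_Ici.2 hφ.le) (Set.mem_Ici.2 le_rfl)
      (div_nonneg ht hφ.le) (sub_nonneg.2 ((div_le_one hφ).2 htφ))
      (add_sub_cancel (t / φ) 1)
    simp only [smul_eq_mul, mul_zero, add_zero, hdzero, div_mul_cancel₀ t hφ.ne'] at h
    calc d t ≤ t / φ * d φ := h
      _ = r * t := by rw [hr]; ring
  have hiter : ∀ n : ℕ, 0 ≤ d^[n] φ ∧ d^[n] φ ≤ r ^ n * φ := by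
    intro n
    induction n with
    | zero => simpa using hφ.le
    | succ n ih =>
      rw [Function.iterate_succ_apply']
      have hle : d^[n] φ ≤ φ :=
        ih.2.trans (mul_le_of_le_one_left hφ.le (pow_le_one₀ hr0 hr1.le))
      refine ⟨hd0 _ ih.1, (hchord _ ih.1 hle).trans ?_⟩
      calc r * d^[n] φ ≤ r * (r ^ n * φ) := mul_le_mul_of_nonneg_left ih.2 hr0
        _ = r ^ (n + 1) * φ := by ring
  have hgeom : HasSum (fun n : ℕ => r ^ n * φ) ((1 - r)⁻¹ * φ) :=
    (hasSum_geometric_of_lt_one hr0 hr1).mul_right φ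
  have hsum : Summable fun n : ℕ => d^[n] φ :=
    Summable.of_nonneg_of_le (fun n => (hiter n).1) (fun n => (hiter n).2) hgeom.summable
  refine ⟨hsum, ?_⟩
  have heq : (1 - r)⁻¹ * φ = φ ^ 2 / (φ - d φ) := by
    have h1 : φ - d φ ≠ 0 := (sub_pos.2 hdφ).ne'
    have h2 : 1 - r = (φ - d φ) / φ := by rw [hr, sub_div, div_self hφ.ne']
    rw [h2, inv_div]
    ring
  calc ∑' n : ℕ, d^[n] φ ≤ ∑' n : ℕ, r ^ n * φ :=
        hsum.tsum_le_tsum (fun n => (hiter n).2) hgeom.summable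
    _ = φ ^ 2 / (φ - d φ) := by rw [hgeom.tsum_eq, heq]
end

section
/- Let H be a real Hilbert space and B a bounded linear operator on H such that for some constants ν > 0 and λ > 0 one has ⟨h, Bh⟩ ≥ ν‖h‖‖Bh‖ for all h ∈ H and ⟨h, Bh⟩ ≤ λ‖Bh‖² for all h ∈ H. Then the range of B is a closed subspace of H. -/
/-!
Combining the two hypotheses and cancelling `‖B h‖` gives `ν * ‖h‖ ≤ lam * ‖B h‖` whenever
`B h ≠ 0`. This forces a dichotomy: if `B k = 0` and `B h ≠ 0`, the bound holds along the whole line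
`h + t • k`, on which `B` is constant, so the line is bounded and `k = 0`. Hence `B` is either zero,
with range `{0}`, or injective and bounded below on all of `H`, and then its range is complete.
-/

open scoped RealInnerProductSpace

/-- a bounded linear operator on a real Hilbert space satisfying both
the acuteness property `⟨h,Bh⟩ ≥ ν‖h‖‖Bh‖` and `⟨h,Bh⟩ ≤ λ‖Bh‖²` has closed range. -/
theorem acute_operator_closed_range
    {H : Type*} [NormedAddCommGroup H] [InnerProductSpace ℝ H] [CompleteSpace H]
    (B : H →L[ℝ] H) (ν lam : ℝ) (hν : 0 < ν) (hlam : 0 < lam)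
    (hacute : ∀ h : H, ν * ‖h‖ * ‖B h‖ ≤ ⟪h, B h⟫)
    (hbound : ∀ h : H, ⟪h, B h⟫ ≤ lam * ‖B h‖ ^ 2) :
    IsClosed (Set.range B) := by
  have key : ∀ h : H, B h ≠ 0 → ‖h‖ ≤ lam / ν * ‖B h‖ := by
    intro h hh
    have hpos : 0 < ‖B h‖ := norm_pos_iff.mpr hh
    have h1 : ν * ‖h‖ ≤ lam * ‖B h‖ := by
      refine le_of_mul_le_mul_right ?_ hpos
      linarith [hacute h, hbound h]
    rw [div_mul_eq_mul_div, le_div_iff₀ hν]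
    linarith
  by_cases hB : ∀ h, B h = 0
  · have hr : Set.range B = {0} := by
      ext y
      simp [hB, eq_comm]
    rw [hr]
    exact isClosed_singleton
  · push Not at hB
    obtain ⟨h, hh⟩ := hB
    have hker : ∀ k, B k = 0 → k = 0 := by
      intro k hk
      by_contra hk0
      have hkpos : 0 < ‖k‖ := norm_pos_iff.mpr hk0
      obtain ⟨n, hn⟩ := exists_nat_gt ((lam / ν * ‖B h‖ + ‖h‖) / ‖k‖)
      rw [div_lt_iff₀ hkpos] at hn
      have hBn : B (h + (n : ℝ) • k) = B h := by simp [hk]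
      have h1 := key (h + (n : ℝ) • k) (by rwa [hBn])
      rw [hBn] at h1
      have h2 : ‖(n : ℝ) • k‖ ≤ ‖h + (n : ℝ) • k‖ + ‖h‖ := by
        simpa using norm_sub_le (h + (n : ℝ) • k) h
      rw [norm_smul, Real.norm_natCast] at h2
      linarith
    have hanti : AntilipschitzWith (lam / ν).toNNReal B := by
      refine B.antilipschitz_of_bound fun x => ?_
      rw [Real.coe_toNNReal _ (div_pos hlam hν).le]
      by_cases hx : B x = 0
      · simp [hker x hx]
      · exact key x hx
    exact hanti.isClosed_range B.uniformContinuous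
end
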